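/- Fix α_x ≥ 0, α_p > 0, γ > 0, σ_ε > 0 and set α_z = α_x²/(γ²·σ_ε²). There exists M > 0 such that for every σ_μ > M, setting α = α_x + α_p + α_z and α_ψ = α²/(α_x + α_p²·σ_μ²), for every Z ∈ ℝ, x_c ∈ ℝ and m ∈ ℝ the equation Φ(√α_ψ·(((α_z + α_p)/α)·θ − (α_z/α)·Z − (α_p/α)·m − x_c/√α)) = θ has exactly one real solution θ*, and θ* ∈ (0,1). -/

import Mathlib

/-- The standard normal cumulative distribution function. -/
noncomputable def stdNormalCDF (x : ℝ) : ℝ :=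
  ∫ t in Set.Iic x, (Real.sqrt (2 * Real.pi))⁻¹ * Real.exp (-t ^ 2 / 2)

open MeasureTheory in
lemma pdf_integrable :
    Integrable (fun t : ℝ => (Real.sqrt (2 * Real.pi))⁻¹ * Real.exp (-t ^ 2 / 2)) := by
  have h := ProbabilityTheory.integrable_gaussianPDFReal 0 1
  simpa [ProbabilityTheory.gaussianPDFReal_def] using h

open MeasureTheory in
lemma pdf_integral :
    ∫ t : ℝ, (Real.sqrt (2 * Real.pi))⁻¹ * Real.exp (-t ^ 2 / 2) = 1 := by
  have h := ProbabilityTheory.integral_gaussianPDFReal_eq_one 0 (v := 1) one_ne_zero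
  simpa [ProbabilityTheory.gaussianPDFReal_def] using h

lemma pdf_pos (t : ℝ) : 0 < (Real.sqrt (2 * Real.pi))⁻¹ * Real.exp (-t ^ 2 / 2) := by
  have := Real.pi_pos
  positivity

lemma pdf_le (t : ℝ) : (Real.sqrt (2 * Real.pi))⁻¹ * Real.exp (-t ^ 2 / 2) ≤ 1 := by
  have h1 : (Real.sqrt (2 * Real.pi))⁻¹ ≤ 1 := by
    apply inv_le_one_of_one_le₀
    rw [Real.one_le_sqrt]
    linarith [Real.pi_gt_three]
  have h2 : Real.exp (-t ^ 2 / 2) ≤ 1 := by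
    rw [Real.exp_le_one_iff]
    nlinarith [sq_nonneg t]
  exact mul_le_one₀ h1 (Real.exp_pos _).le h2

open MeasureTheory in
lemma setInt_pos (s : Set ℝ) (hs : volume s ≠ 0) :
    0 < ∫ t in s, (Real.sqrt (2 * Real.pi))⁻¹ * Real.exp (-t ^ 2 / 2) := by
  rw [integral_pos_iff_support_of_nonneg (fun t => (pdf_pos t).le) pdf_integrable.integrableOn]
  have : Function.support (fun t : ℝ => (Real.sqrt (2 * Real.pi))⁻¹ * Real.exp (-t ^ 2 / 2))
      = Set.univ := by
    ext t
    simpa only [Function.mem_support, Set.mem_univ, iff_true] using (pdf_pos t).ne'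
  rw [this, Measure.restrict_apply_univ]
  exact pos_iff_ne_zero.mpr hs

lemma cdf_pos (x : ℝ) : 0 < stdNormalCDF x := setInt_pos _ (by simp)

lemma cdf_lt (x : ℝ) : stdNormalCDF x < 1 := by
  have h := MeasureTheory.integral_add_compl (s := Set.Iic x) measurableSet_Iic pdf_integrable
  rw [pdf_integral] at h
  have h2 := setInt_pos (Set.Iic x)ᶜ (by simp)
  have : stdNormalCDF x = 1 - _ := eq_sub_of_add_eq h
  linarith

lemma cdf_lip (x y : ℝ) : |stdNormalCDF y - stdNormalCDF x| ≤ |y - x| := by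
  unfold stdNormalCDF
  rw [intervalIntegral.integral_Iic_sub_Iic pdf_integrable.integrableOn
    pdf_integrable.integrableOn]
  have := intervalIntegral.norm_integral_le_of_norm_le_const (a := x) (b := y) (C := 1)
    (f := fun t : ℝ => (Real.sqrt (2 * Real.pi))⁻¹ * Real.exp (-t ^ 2 / 2))
    (fun t _ => by rw [Real.norm_eq_abs, abs_of_pos (pdf_pos t)]; exact pdf_le t)
  simpa using this

lemma cdf_cont : Continuous stdNormalCDF := by
  have : LipschitzWith 1 stdNormalCDF := LipschitzWith.of_dist_le_mul (fun x y => by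
    simpa [Real.dist_eq] using cdf_lip y x)
  exact this.continuous

lemma fixed_unique (s b : ℝ) (h0 : 0 ≤ s) (h1 : s < 1) :
    ∃ θ ∈ Set.Ioo (0 : ℝ) 1, stdNormalCDF (s * θ + b) = θ ∧
      ∀ θ' : ℝ, stdNormalCDF (s * θ' + b) = θ' → θ' = θ := by
  have hc : Continuous (fun θ => stdNormalCDF (s * θ + b) - θ) :=
    (cdf_cont.comp (by fun_prop)).sub continuous_id
  have hm : (0 : ℝ) ∈ Set.Icc (stdNormalCDF (s * 1 + b) - 1) (stdNormalCDF (s * 0 + b) - 0) :=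
    ⟨by linarith [cdf_lt (s * 1 + b)], by linarith [cdf_pos (s * 0 + b)]⟩
  obtain ⟨θ, -, hθ⟩ := intermediate_value_Icc' (zero_le_one' ℝ) hc.continuousOn hm
  have he : stdNormalCDF (s * θ + b) = θ := sub_eq_zero.mp hθ
  refine ⟨θ, ⟨by rw [← he]; exact cdf_pos _, by rw [← he]; exact cdf_lt _⟩, he, ?_⟩
  intro θ' he'
  have hl := cdf_lip (s * θ + b) (s * θ' + b)
  rw [he, he', show s * θ' + b - (s * θ + b) = s * (θ' - θ) by ring, abs_mul,
    abs_of_nonneg h0] at hl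
  by_contra hne
  have : 0 < |θ' - θ| := abs_pos.mpr (sub_ne_zero.mpr hne)
  nlinarith

theorem stmt_10 (αx αp γ σε : ℝ) (hαx : 0 ≤ αx) (hαp : 0 < αp) (hγ : 0 < γ)
    (hσε : 0 < σε) (αz : ℝ) (hαz : αz = αx ^ 2 / (γ ^ 2 * σε ^ 2)) :
    ∃ M > (0 : ℝ), ∀ σμ > M,
      ∀ α αψ : ℝ, α = αx + αp + αz → αψ = α ^ 2 / (αx + αp ^ 2 * σμ ^ 2) →
        ∀ Z xc m : ℝ,
          ∃ θ ∈ Set.Ioo (0 : ℝ) 1,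
            stdNormalCDF (Real.sqrt αψ *
              (((αz + αp) / α) * θ - (αz / α) * Z - (αp / α) * m - xc / Real.sqrt α)) = θ ∧
            ∀ θ' : ℝ,
              stdNormalCDF (Real.sqrt αψ *
                (((αz + αp) / α) * θ' - (αz / α) * Z - (αp / α) * m -
                  xc / Real.sqrt α)) = θ' →
              θ' = θ := by
  have hz : 0 ≤ αz := by rw [hαz]; positivity
  refine ⟨(αz + αp) / αp, by positivity, ?_⟩
  intro σμ hσ α αψ hα hψ Z xc m
  have hαpos : 0 < α := by rw [hα]; positivity
  have hσ' : αz + αp < αp * σμ := by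
    have := (div_lt_iff₀ hαp).mp hσ
    linarith
  have hD : (αz + αp) ^ 2 < αx + αp ^ 2 * σμ ^ 2 := by
    nlinarith
  have hD0 : 0 < αx + αp ^ 2 * σμ ^ 2 := lt_of_le_of_lt (sq_nonneg _) hD
  have hs : Real.sqrt αψ * ((αz + αp) / α) = (αz + αp) / Real.sqrt (αx + αp ^ 2 * σμ ^ 2) := by
    rw [hψ, Real.sqrt_div (sq_nonneg α), Real.sqrt_sq hαpos.le]
    have := Real.sqrt_pos.mpr hD0
    field_simp
  have hs1 : Real.sqrt αψ * ((αz + αp) / α) < 1 := by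
    rw [hs, div_lt_one (Real.sqrt_pos.mpr hD0)]
    exact Real.lt_sqrt_of_sq_lt hD
  have key := fixed_unique (Real.sqrt αψ * ((αz + αp) / α))
    (Real.sqrt αψ * (- (αz / α) * Z - (αp / α) * m - xc / Real.sqrt α)) (by positivity) hs1
  have e : ∀ θ : ℝ, Real.sqrt αψ *
      (((αz + αp) / α) * θ - (αz / α) * Z - (αp / α) * m - xc / Real.sqrt α) =
      Real.sqrt αψ * ((αz + αp) / α) * θ +
      Real.sqrt αψ * (- (αz / α) * Z - (αp / α) * m - xc / Real.sqrt α) := fun θ => by ring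
  simp only [e]
  exact key
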